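/- Let R be a commutative ring, x, y ∈ R, and M an R-module. Then there is a natural short exact sequence of R-modules 0 → (Γ_y M)/x^∞ → H¹_{(x,y)}(M) → Γ_x(M/y^∞) → 0, where H¹_{(x,y)}(M) is the first cohomology of the Čech complex M → M_x ⊕ M_y → M_{xy}, (Γ_y M)/x^∞ is the cokernel of the localization map Γ_y M → (Γ_y M)_x, and Γ_x(M/y^∞) is the x-power torsion submodule of the cokernel of M → M_y. -/

import Mathlib

noncomputable section

variable {R : Type*} [CommRing R]

/-- The localization of `M` away from `x`. -/
abbrev Loc (x : R) (M : Type*) [AddCommGroup M] [Module R M] :=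
  LocalizedModule (Submonoid.powers x) M

/-- The canonical localization map `M → M_x`. -/
abbrev locMap (x : R) (M : Type*) [AddCommGroup M] [Module R M] : M →ₗ[R] Loc x M :=
  LocalizedModule.mkLinearMap (Submonoid.powers x) M

/-- The cokernel `M/x^∞` of the localization map `M → M_x`. -/
abbrev CokLoc (x : R) (M : Type*) [AddCommGroup M] [Module R M] :=
  Loc x M ⧸ LinearMap.range (locMap x M)

lemma isUnit_left (x y : R) (M : Type*) [AddCommGroup M] [Module R M] :
    ∀ s : Submonoid.powers x,
      IsUnit ((algebraMap R (Module.End R (Loc (x * y) M))) s) := by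
  rintro ⟨s, n, rfl⟩
  have h : IsUnit ((algebraMap R (Module.End R (Loc (x * y) M))) (x * y)) :=
    IsLocalizedModule.map_units (locMap (x * y) M) ⟨x * y, Submonoid.mem_powers _⟩
  rw [map_mul] at h
  have hx := (((Commute.all x y).map
    (algebraMap R (Module.End R (Loc (x * y) M)))).isUnit_mul_iff.mp h).1
  simpa [map_pow] using hx.pow n

lemma isUnit_right (x y : R) (M : Type*) [AddCommGroup M] [Module R M] :
    ∀ s : Submonoid.powers y,
      IsUnit ((algebraMap R (Module.End R (Loc (x * y) M))) s) := by
  rintro ⟨s, n, rfl⟩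
  have h : IsUnit ((algebraMap R (Module.End R (Loc (x * y) M))) (x * y)) :=
    IsLocalizedModule.map_units (locMap (x * y) M) ⟨x * y, Submonoid.mem_powers _⟩
  rw [map_mul] at h
  have hy := (((Commute.all x y).map
    (algebraMap R (Module.End R (Loc (x * y) M)))).isUnit_mul_iff.mp h).2
  simpa [map_pow] using hy.pow n

/-- The canonical map `M_x → M_{xy}`. -/
abbrev locMapLeft (x y : R) (M : Type*) [AddCommGroup M] [Module R M] :
    Loc x M →ₗ[R] Loc (x * y) M :=
  LocalizedModule.lift (Submonoid.powers x) (locMap (x * y) M) (isUnit_left x y M)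

/-- The canonical map `M_y → M_{xy}`. -/
abbrev locMapRight (x y : R) (M : Type*) [AddCommGroup M] [Module R M] :
    Loc y M →ₗ[R] Loc (x * y) M :=
  LocalizedModule.lift (Submonoid.powers y) (locMap (x * y) M) (isUnit_right x y M)

/-- The first differential `M → M_x ⊕ M_y` of the Čech complex of `(x, y)`. -/
def cechD0 (x y : R) (M : Type*) [AddCommGroup M] [Module R M] :
    M →ₗ[R] Loc x M × Loc y M :=
  (locMap x M).prod (locMap y M)

/-- The second differential `M_x ⊕ M_y → M_{xy}`, `(a, b) ↦ b - a`. -/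
def cechD1 (x y : R) (M : Type*) [AddCommGroup M] [Module R M] :
    Loc x M × Loc y M →ₗ[R] Loc (x * y) M :=
  (locMapRight x y M).comp (LinearMap.snd R _ _) -
    (locMapLeft x y M).comp (LinearMap.fst R _ _)

/-- `H⁰` of the Čech complex of `(x, y)` with coefficients in `M`. -/
def cechH0 (x y : R) (M : Type*) [AddCommGroup M] [Module R M] : Submodule R M :=
  LinearMap.ker (cechD0 x y M)

/-- `H¹` of the Čech complex of `(x, y)` with coefficients in `M`. -/
def cechH1 (x y : R) (M : Type*) [AddCommGroup M] [Module R M] :=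
  LinearMap.ker (cechD1 x y M) ⧸
    Submodule.comap (LinearMap.ker (cechD1 x y M)).subtype (LinearMap.range (cechD0 x y M))

instance (x y : R) (M : Type*) [AddCommGroup M] [Module R M] : AddCommGroup (cechH1 x y M) := by
  unfold cechH1; infer_instance

instance (x y : R) (M : Type*) [AddCommGroup M] [Module R M] : Module R (cechH1 x y M) := by
  unfold cechH1; infer_instance

/-- `H²` of the Čech complex of `(x, y)` with coefficients in `M`. -/
def cechH2 (x y : R) (M : Type*) [AddCommGroup M] [Module R M] :=
  Loc (x * y) M ⧸ LinearMap.range (cechD1 x y M)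

instance (x y : R) (M : Type*) [AddCommGroup M] [Module R M] : AddCommGroup (cechH2 x y M) := by
  unfold cechH2; infer_instance

instance (x y : R) (M : Type*) [AddCommGroup M] [Module R M] : Module R (cechH2 x y M) := by
  unfold cechH2; infer_instance


/-- The `x`-power torsion submodule `Γ_x M = {m ∈ M : xⁿ • m = 0 for some n}`. -/
def elPowerTorsion (x : R) (M : Type*) [AddCommGroup M] [Module R M] : Submodule R M :=
  ⨆ n : ℕ, Submodule.torsionBy R M (x ^ n)

/-!
Since `M_{xy} = (M_y)_x`, the Čech complex is the total complex of the square that compares the map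
`β : M → M_y` with its localization `γ : M_x → M_{xy}` at `x`. Every commutative square with
vertical sides `β`, `γ` has an exact sequence `ker β → ker γ → H¹ → coker β → coker γ`, so `H¹` is
an extension of the kernel of `coker β → coker γ` by the cokernel of `ker β → ker γ`. As
localization is exact, `ker γ = (ker β)_x` and `coker γ = (coker β)_x`; hence the cokernel is
`(ker β)/x^∞` with `ker β = Γ_y M`, and the kernel is `Γ_x (coker β)` with `coker β = M/y^∞`.
-/

section Square

variable {k : Type*} [Ring k] {M A B C : Type*} [AddCommGroup M] [AddCommGroup A] [AddCommGroup B]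
  [AddCommGroup C] [Module k M] [Module k A] [Module k B] [Module k C]

/-- The first cohomology of the total complex `M → A × B → C`, with differentials
`m ↦ (α m, β m)` and `(a, b) ↦ δ b - γ a`, of a square with sides `α : M → A`, `β : M → B`,
`γ : A → C`, `δ : B → C`. Commutativity of the square is not part of the definition: for an
arbitrary square this is cocycles modulo those coboundaries that happen to be cocycles. -/
abbrev SquareH1 (α : M →ₗ[k] A) (β : M →ₗ[k] B) (γ : A →ₗ[k] C) (δ : B →ₗ[k] C) : Type _ :=
  LinearMap.ker (δ ∘ₗ LinearMap.snd k A B - γ ∘ₗ LinearMap.fst k A B) ⧸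
    (LinearMap.range (α.prod β)).comap
      (LinearMap.ker (δ ∘ₗ LinearMap.snd k A B - γ ∘ₗ LinearMap.fst k A B)).subtype

namespace SquareH1

variable (α : M →ₗ[k] A) (β : M →ₗ[k] B) (γ : A →ₗ[k] C) (δ : B →ₗ[k] C)

/-- The class in `SquareH1 α β γ δ` of the cocycle `(a, b)`. -/
def mk (a : A) (b : B) (h : δ b = γ a) : SquareH1 α β γ δ :=
  Submodule.Quotient.mk ⟨(a, b), sub_eq_zero.mpr h⟩

variable {α β γ δ}

lemma exists_eq_mk (q : SquareH1 α β γ δ) : ∃ a b, ∃ h : δ b = γ a, q = mk α β γ δ a b h := by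
  obtain ⟨⟨⟨a, b⟩, h⟩, rfl⟩ := Submodule.Quotient.mk_surjective _ q
  exact ⟨a, b, sub_eq_zero.mp h, rfl⟩

lemma mk_eq_mk_iff {a a' : A} {b b' : B} (h : δ b = γ a) (h' : δ b' = γ a') :
    mk α β γ δ a b h = mk α β γ δ a' b' h' ↔ ∃ m, α m = a - a' ∧ β m = b - b' :=
  (Submodule.Quotient.eq _).trans (exists_congr fun _ => Prod.ext_iff)

variable (α β γ δ)

/-- The map `ker γ → H¹` of the square, sending `a` to the class of `(a, 0)`. -/
def ofKer : LinearMap.ker γ →ₗ[k] SquareH1 α β γ δ :=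
  Submodule.mkQ _ ∘ₗ (LinearMap.inl k A B ∘ₗ (LinearMap.ker γ).subtype).codRestrict _ fun a =>
    sub_eq_zero.mpr ((map_zero δ).trans a.2.symm)

/-- The map `H¹ → coker β` of the square, sending the class of `(a, b)` to that of `b`. -/
def toCoker : SquareH1 α β γ δ →ₗ[k] B ⧸ LinearMap.range β :=
  Submodule.liftQ _ ((LinearMap.range β).mkQ ∘ₗ LinearMap.snd k A B ∘ₗ Submodule.subtype _) <| by
    rintro z ⟨m, hm⟩
    exact (Submodule.Quotient.mk_eq_zero _).mpr ⟨m, congrArg Prod.snd hm⟩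

variable {α β γ δ}

lemma ofKer_apply (a : LinearMap.ker γ) :
    ofKer α β γ δ a = mk α β γ δ a 0 ((map_zero δ).trans a.2.symm) :=
  rfl

lemma toCoker_mk {a : A} {b : B} (h : δ b = γ a) :
    toCoker α β γ δ (mk α β γ δ a b h) = Submodule.Quotient.mk b :=
  rfl

lemma ofKer_eq_zero_iff {a : LinearMap.ker γ} :
    ofKer α β γ δ a = 0 ↔ ∃ m ∈ LinearMap.ker β, α m = a := by
  rw [← map_zero (ofKer α β γ δ), ofKer_apply, ofKer_apply, mk_eq_mk_iff]
  simp only [ZeroMemClass.coe_zero, sub_zero, LinearMap.mem_ker, and_comm]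

lemma exact_ofKer_toCoker (comm : γ ∘ₗ α = δ ∘ₗ β) :
    Function.Exact (ofKer α β γ δ) (toCoker α β γ δ) := by
  intro q
  obtain ⟨a, b, h, rfl⟩ := exists_eq_mk q
  rw [toCoker_mk, Submodule.Quotient.mk_eq_zero]
  constructor
  · rintro ⟨m, rfl⟩
    have hker : a - α m ∈ LinearMap.ker γ := by
      rw [LinearMap.mem_ker, map_sub, ← h, sub_eq_zero]
      exact (LinearMap.congr_fun comm m).symm
    refine ⟨⟨a - α m, hker⟩, ?_⟩
    rw [ofKer_apply, mk_eq_mk_iff]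
    exact ⟨-m, by simp, by simp⟩
  · rintro ⟨a', ha'⟩
    rw [ofKer_apply, mk_eq_mk_iff] at ha'
    obtain ⟨m, -, hm⟩ := ha'
    exact ⟨-m, by simp [hm]⟩

lemma mk_mem_range_toCoker_iff (comm : γ ∘ₗ α = δ ∘ₗ β) {b : B} :
    Submodule.Quotient.mk b ∈ LinearMap.range (toCoker α β γ δ) ↔ δ b ∈ LinearMap.range γ := by
  constructor
  · rintro ⟨q, hq⟩
    obtain ⟨a, b', h, rfl⟩ := exists_eq_mk q
    rw [toCoker_mk, Submodule.Quotient.eq] at hq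
    obtain ⟨m, hm⟩ := hq
    refine ⟨a - α m, ?_⟩
    calc γ (a - α m) = δ b' - δ (β m) := by
          rw [map_sub, ← h]
          exact congrArg _ (LinearMap.congr_fun comm m)
      _ = δ b := by rw [hm, map_sub, sub_sub_cancel]
  · rintro ⟨a, ha⟩
    exact ⟨mk α β γ δ a b ha.symm, rfl⟩

end SquareH1

end Square

section Localization

variable (S : Submonoid R) {M A B C K : Type*} [AddCommGroup M] [AddCommGroup A] [AddCommGroup B]
  [AddCommGroup C] [AddCommGroup K] [Module R M] [Module R A] [Module R B] [Module R C] [Module R K]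

lemma ker_eq_torsion'_of_isLocalizedModule (α : M →ₗ[R] A) [IsLocalizedModule S α] :
    LinearMap.ker α = Submodule.torsion' R M S :=
  Submodule.ext fun _ => IsLocalizedModule.eq_zero_iff S α

variable {α : M →ₗ[R] A} {β : M →ₗ[R] B} {γ : A →ₗ[R] C} {δ : B →ₗ[R] C}
  [IsLocalizedModule S α] [IsLocalizedModule S δ]

lemma eq_isLocalizedModule_map (comm : γ ∘ₗ α = δ ∘ₗ β) :
    γ = IsLocalizedModule.map S α δ β :=
  IsLocalizedModule.linearMap_ext S α δ (comm.trans (IsLocalizedModule.map_comp S α δ β).symm)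

lemma mem_range_iff_mk_mem_torsion' (comm : γ ∘ₗ α = δ ∘ₗ β) (b : B) :
    δ b ∈ LinearMap.range γ ↔
      (Submodule.Quotient.mk b : B ⧸ LinearMap.range β) ∈ Submodule.torsion' R _ S := by
  let ρ := LocalizedModule.mkLinearMap S (B ⧸ LinearMap.range β)
  have hexact : Function.Exact γ (IsLocalizedModule.map S δ ρ (LinearMap.range β).mkQ) := by
    rw [eq_isLocalizedModule_map S comm]
    exact IsLocalizedModule.map_exact S α δ ρ _ _ (LinearMap.exact_map_mkQ_range β)
  rw [← ker_eq_torsion'_of_isLocalizedModule S ρ, LinearMap.mem_ker, LinearMap.mem_range,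
    ← Submodule.mkQ_apply, ← IsLocalizedModule.map_apply S δ ρ]
  exact (hexact (δ b)).symm

variable (κ : LinearMap.ker β →ₗ[R] K) [IsLocalizedModule S κ]

/-- Localization commutes with kernels: in a commutative square whose sides `α : M → A` and
`δ : B → C` are localizations at `S`, the localization `K` of `ker β` is `ker γ`. -/
def localizedKerEquiv (comm : γ ∘ₗ α = δ ∘ₗ β) : K ≃ₗ[R] LinearMap.ker γ :=
  have hexact : Function.Exact (IsLocalizedModule.map S κ α (LinearMap.ker β).subtype) γ := by
    rw [eq_isLocalizedModule_map S comm]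
    exact IsLocalizedModule.map_exact S κ α δ _ _ β.exact_subtype_ker_map
  LinearEquiv.ofInjective _
      (IsLocalizedModule.map_injective S κ α _ (LinearMap.ker β).injective_subtype) ≪≫ₗ
    LinearEquiv.ofEq _ _ hexact.linearMap_ker_eq.symm

lemma coe_localizedKerEquiv_apply (comm : γ ∘ₗ α = δ ∘ₗ β) (m : LinearMap.ker β) :
    (localizedKerEquiv S κ comm (κ m) : A) = α m :=
  IsLocalizedModule.map_apply S κ α (LinearMap.ker β).subtype m

namespace SquareH1

lemma range_toCoker_eq_torsion' (comm : γ ∘ₗ α = δ ∘ₗ β) :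
    LinearMap.range (toCoker α β γ δ) = Submodule.torsion' R (B ⧸ LinearMap.range β) S := by
  ext q
  obtain ⟨b, rfl⟩ := Submodule.Quotient.mk_surjective _ q
  rw [mk_mem_range_toCoker_iff comm, mem_range_iff_mk_mem_torsion' S comm]

lemma ker_ofKer_comp_localizedKerEquiv (comm : γ ∘ₗ α = δ ∘ₗ β) :
    LinearMap.ker (ofKer α β γ δ ∘ₗ (localizedKerEquiv S κ comm).toLinearMap) =
      LinearMap.range κ := by
  ext a
  rw [LinearMap.mem_ker, LinearMap.comp_apply, LinearEquiv.coe_coe, ofKer_eq_zero_iff]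
  constructor
  · rintro ⟨m, hm, hma⟩
    refine ⟨⟨m, hm⟩, (localizedKerEquiv S κ comm).injective (Subtype.ext ?_)⟩
    rw [coe_localizedKerEquiv_apply, hma]
  · rintro ⟨m, rfl⟩
    exact ⟨m, m.2, (coe_localizedKerEquiv_apply S κ comm m).symm⟩

theorem exists_shortExact_of_isLocalizedModule (comm : γ ∘ₗ α = δ ∘ₗ β) :
    ∃ (f : K ⧸ LinearMap.range κ →ₗ[R] SquareH1 α β γ δ)
      (g : SquareH1 α β γ δ →ₗ[R] Submodule.torsion' R (B ⧸ LinearMap.range β) S),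
      Function.Injective f ∧ Function.Exact f g ∧ Function.Surjective g := by
  have hker := ker_ofKer_comp_localizedKerEquiv S κ comm
  rw [← range_toCoker_eq_torsion' S comm]
  refine ⟨(LinearMap.range κ).liftQ _ hker.ge, (toCoker α β γ δ).rangeRestrict,
    LinearMap.ker_eq_bot.mp (Submodule.ker_liftQ_eq_bot _ _ _ hker.le), ?_,
    (toCoker α β γ δ).surjective_rangeRestrict⟩
  rw [LinearMap.exact_iff, LinearMap.ker_rangeRestrict, Submodule.range_liftQ,
    LinearMap.range_comp_of_range_eq_top _ (LinearEquiv.range _)]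
  exact (exact_ofKer_toCoker comm).linearMap_ker_eq

end SquareH1

end Localization

section Away

variable {M : Type*} [AddCommGroup M] [Module R M]

lemma isLocalizedModule_away_of_comp {N P : Type*} [AddCommGroup N] [AddCommGroup P] [Module R N]
    [Module R P] (x y : R) (f : M →ₗ[R] N) (g : N →ₗ[R] P) [IsLocalizedModule.Away y f]
    [IsLocalizedModule.Away (x * y) (g ∘ₗ f)] : IsLocalizedModule.Away x g := by
  have hxy := IsLocalizedModule.Away.isUnit_algebraMap (g ∘ₗ f) (x * y)
  rw [map_mul, (Algebra.commute_algebraMap_left _ _).isUnit_mul_iff] at hxy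
  have hyN (n : ℕ) := (IsLocalizedModule.Away.isUnit_algebraMap f y).pow n
  have hyP (n : ℕ) := hxy.2.pow n
  simp only [← map_pow, Module.End.isUnit_iff] at hyN hyP
  refine .mk_of_addCommGroup hxy.1 (fun p => ?_) fun b hb => ?_
  · obtain ⟨n, m, hm⟩ := IsLocalizedModule.Away.surj (g ∘ₗ f) (x * y) p
    obtain ⟨b, hb : y ^ n • b = f m⟩ := (hyN n).surjective (f m)
    refine ⟨n, b, (hyP n).injective ?_⟩
    change y ^ n • x ^ n • p = y ^ n • g b
    rw [← map_smul, hb, ← mul_smul, ← mul_pow, mul_comm y x, hm, LinearMap.comp_apply]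
  · obtain ⟨n, m, hm⟩ := IsLocalizedModule.Away.surj f y b
    have hgm : (g ∘ₗ f) m = (g ∘ₗ f) 0 := by
      rw [LinearMap.comp_apply, ← hm, map_smul, hb, smul_zero, map_zero]
    obtain ⟨j, hj⟩ := IsLocalizedModule.Away.exists_of_eq (x * y) hgm
    refine ⟨j, (hyN (j + n)).injective ?_⟩
    change y ^ (j + n) • x ^ j • b = y ^ (j + n) • 0
    calc y ^ (j + n) • x ^ j • b = (x * y) ^ j • y ^ n • b := by
          simp only [← mul_smul]; congr 1; ring
      _ = y ^ (j + n) • 0 := by rw [hm, ← map_smul, hj, smul_zero, map_zero, smul_zero]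

lemma locMapLeft_comp_locMap (x y : R) : locMapLeft x y M ∘ₗ locMap x M = locMap (x * y) M :=
  LocalizedModule.lift_comp _ _ (isUnit_left x y M)

lemma locMapRight_comp_locMap (x y : R) : locMapRight x y M ∘ₗ locMap y M = locMap (x * y) M :=
  LocalizedModule.lift_comp _ _ (isUnit_right x y M)

instance isLocalizedModule_away_locMapRight (x y : R) :
    IsLocalizedModule.Away x (locMapRight x y M) := by
  have : IsLocalizedModule.Away (x * y) (locMapRight x y M ∘ₗ locMap y M) := by
    rw [locMapRight_comp_locMap]
    infer_instance
  exact isLocalizedModule_away_of_comp x y (locMap y M) (locMapRight x y M)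

lemma elPowerTorsion_eq_torsion' (x : R) :
    elPowerTorsion x M = Submodule.torsion' R M (Submonoid.powers x) := by
  have hmono : Monotone fun n : ℕ => Submodule.torsionBy R M (x ^ n) := fun _ _ hmn =>
    Submodule.torsionBy_le_torsionBy_of_dvd _ _ (pow_dvd_pow x hmn)
  ext m
  simp only [elPowerTorsion, Submodule.mem_iSup_of_directed _ hmono.directed_le,
    Submodule.mem_torsionBy_iff, Submodule.mem_torsion'_iff, Subtype.exists,
    Submonoid.mem_powers_iff, Submonoid.mk_smul, exists_prop, exists_exists_eq_and]

lemma elPowerTorsion_eq_ker_locMap (y : R) :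
    elPowerTorsion y M = LinearMap.ker (locMap y M) := by
  rw [elPowerTorsion_eq_torsion', ker_eq_torsion'_of_isLocalizedModule (Submonoid.powers y)]

end Away

/-- There is a natural short exact sequence
`0 → (Γ_y M)/x^∞ → H¹_{(x,y)}(M) → Γ_x(M/y^∞) → 0`. -/
theorem cechH1_ses (x y : R) (M : Type*) [AddCommGroup M] [Module R M] :
    ∃ (f : CokLoc x (elPowerTorsion y M) →ₗ[R] cechH1 x y M)
      (g : cechH1 x y M →ₗ[R] elPowerTorsion x (CokLoc y M)),
      Function.Injective f ∧ Function.Exact f g ∧ Function.Surjective g := by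
  have comm : locMapLeft x y M ∘ₗ locMap x M = locMapRight x y M ∘ₗ locMap y M := by
    rw [locMapLeft_comp_locMap, locMapRight_comp_locMap]
  rw [elPowerTorsion_eq_ker_locMap y, elPowerTorsion_eq_torsion' x]
  exact SquareH1.exists_shortExact_of_isLocalizedModule (Submonoid.powers x) (locMap x _) comm

end
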